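/- arXiv:1206.2424 — 2 statements merged into one kernel-verified Lean document; each statement's English description precedes it below -/
import Mathlib

section
/- For every integer s ≥ 2, the sum of double zeta values at odd arguments satisfies ∑_{j=1}^{s-1} ζ(2j+1, 2s-2j-1) = (1/4) ζ(2s). -/
/-!
For `0 < m < n` the sum over `j` is a finite geometric progression:
`∑_{j=1}^{k} 1/(n^(2j+1) m^(2k+1-2j)) = m/(n(n²-m²)) * (1/m^(2k) - 1/n^(2k))`, with `k = s - 1`
(`geom_term`). The two parts are summed over `0 < m < n` in opposite orders.

* For fixed `m`, partial fractions and telescoping give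
  `∑_{n>m} m/(n(n²-m²)) = (2 H_m - H_{2m})/(2m)` (`hasSum_col`).
* For fixed `n`, partial fractions give
  `∑_{m<n} m/(n(n²-m²)) = (2 H_n - H_{2n})/(2n) - 1/(4n²)` (`sum_row`).

After weighting by `1/m^(2k)` and `1/n^(2k)` the harmonic numbers cancel, and what is left is
`∑ 1/(4 n^(2k+2)) = ζ(2s)/4`. All terms are nonnegative and `H_m ≤ m`, so the rearrangement is
justified by comparison with `∑ 1/m^(2k)`.
-/

open scoped BigOperators

/-- Riemann zeta value at a natural number `s ≥ 2`: `ζ(s) = ∑_{n≥1} 1/n^s`. -/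
noncomputable def rzeta (s : ℕ) : ℝ := ∑' n : ℕ, 1 / (n : ℝ) ^ s

/-- Double zeta value `ζ(a,b) = ∑_{n≥1} ∑_{m=1}^{n-1} 1/(n^a m^b)`. -/
noncomputable def dzeta (a b : ℕ) : ℝ :=
  ∑' n : ℕ, ∑ m ∈ Finset.Ioo 0 n, 1 / ((n : ℝ) ^ a * (m : ℝ) ^ b)

/-- Witten zeta function `W(r,s,t) = ∑_{n,m ≥ 1} 1/(n^r m^s (n+m)^t)`. -/
noncomputable def wzeta (r s t : ℕ) : ℝ :=
  ∑' n : ℕ+, ∑' m : ℕ+, 1 / ((n : ℝ) ^ r * (m : ℝ) ^ s * ((n : ℝ) + (m : ℝ)) ^ t)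

/-- Alternating double zeta value `ζ(a, b̄)`. -/
noncomputable def dzetaAB (a b : ℕ) : ℝ :=
  ∑' n : ℕ, ∑ m ∈ Finset.Ioo 0 n, (1 / (n : ℝ) ^ a) * ((-1 : ℝ) ^ (m - 1) / (m : ℝ) ^ b)

/-- Alternating double zeta value `ζ(ā, b)`. -/
noncomputable def dzetaBA (a b : ℕ) : ℝ :=
  ∑' n : ℕ, ∑ m ∈ Finset.Ioo 0 n, ((-1 : ℝ) ^ (n - 1) / (n : ℝ) ^ a) * (1 / (m : ℝ) ^ b)

/-- Doubly alternating double zeta value `ζ(ā, b̄)`. -/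
noncomputable def dzetaBB (a b : ℕ) : ℝ :=
  ∑' n : ℕ, ∑ m ∈ Finset.Ioo 0 n,
    ((-1 : ℝ) ^ (n - 1) / (n : ℝ) ^ a) * ((-1 : ℝ) ^ (m - 1) / (m : ℝ) ^ b)

/-- The `n`-th harmonic number `H_n = ∑_{k=1}^n 1/k` (with `H_0 = 0`). -/
noncomputable def H (n : ℕ) : ℝ := ∑ k ∈ Finset.Icc 1 n, 1 / (k : ℝ)

lemma H_succ (n : ℕ) : H (n + 1) = H n + 1 / ((n : ℝ) + 1) := by
  unfold H
  rw [Finset.sum_Icc_succ_top (by omega)]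
  push_cast
  rfl

lemma H_nonneg (n : ℕ) : 0 ≤ H n := by
  unfold H
  positivity

lemma H_le (n : ℕ) : H n ≤ n := by
  induction n with
  | zero => simp [H]
  | succ n ih =>
    rw [H_succ]
    push_cast
    have : 1 / ((n : ℝ) + 1) ≤ 1 := by
      rw [div_le_one (by positivity)]
      linarith [(Nat.cast_nonneg n : (0 : ℝ) ≤ n)]
    linarith

/-- The telescoping increment of `hasSum_H` from `m` to `m + 1`. -/
lemma hasSum_step (m : ℕ) :
    HasSum (fun i : ℕ => 1 / ((i : ℝ) + 1 + m) - 1 / ((i : ℝ) + 1 + m + 1))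
      (1 / ((m : ℝ) + 1)) := by
  rw [hasSum_iff_tendsto_nat_of_nonneg]
  · have h : ∀ N : ℕ, ∑ i ∈ Finset.range N,
        (1 / ((i : ℝ) + 1 + m) - 1 / ((i : ℝ) + 1 + m + 1))
        = 1 / ((m : ℝ) + 1) - 1 / (((N + m : ℕ) : ℝ) + 1) := by
      intro N
      induction N with
      | zero => simp
      | succ N ih =>
        rw [Finset.sum_range_succ, ih]
        push_cast
        ring
    simp_rw [h]
    have h2 := (Filter.tendsto_add_atTop_iff_nat m).2
      (tendsto_one_div_add_atTop_nhds_zero_nat (𝕜 := ℝ))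
    simpa using h2.const_sub (1 / ((m : ℝ) + 1))
  · intro i
    rw [sub_nonneg]
    apply one_div_le_one_div_of_le <;> [positivity; linarith]

lemma hasSum_H (m : ℕ) :
    HasSum (fun i : ℕ => 1 / ((i : ℝ) + 1) - 1 / ((i : ℝ) + 1 + m)) (H m) := by
  induction m with
  | zero => simp [H, hasSum_zero]
  | succ m ih =>
    rw [H_succ]
    convert ih.add (hasSum_step m) using 2 with i
    push_cast
    ring

/-- The kernel `m / (n (n² - m²))`, extended by zero outside `0 < m < n`. -/
noncomputable def ker (n m : ℕ) : ℝ :=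
  if 0 < m ∧ m < n then (m : ℝ) / (n * ((n : ℝ) ^ 2 - (m : ℝ) ^ 2)) else 0

lemma ker_nonneg (n m : ℕ) : 0 ≤ ker n m := by
  unfold ker
  split_ifs with h
  · have h1 : (m : ℝ) < n := by exact_mod_cast h.2
    have h0 : (0 : ℝ) ≤ m := by positivity
    have : 0 ≤ (n : ℝ) ^ 2 - (m : ℝ) ^ 2 := by nlinarith
    positivity
  · exact le_rfl

/-- With `n = i + m + 1`, the kernel is
`(1/(2m)) * ((1/(n-m) - 1/n) + (1/(n+m) - 1/n))`, a combination of the series of `hasSum_H`. For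
`m = 0` both sides vanish, the right one because division by zero gives zero. -/
lemma hasSum_col (m : ℕ) :
    HasSum (fun n => ker n m) ((2 * H m - H (2 * m)) / (2 * m)) := by
  rcases Nat.eq_zero_or_pos m with rfl | hm
  · simp [ker, hasSum_zero]
  rw [← hasSum_nat_add_iff' (m + 1)]
  have h0 : ∑ i ∈ Finset.range (m + 1), ker i m = 0 := by
    apply Finset.sum_eq_zero
    intro i hi
    rw [Finset.mem_range] at hi
    unfold ker
    rw [if_neg (by omega)]
  rw [h0, sub_zero]
  have h := ((hasSum_H m).add ((hasSum_H m).sub (hasSum_H (2 * m)))).mul_left (1 / (2 * (m : ℝ)))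
  convert h using 1
  · rfl
  · funext i
    unfold ker
    rw [if_pos (by omega)]
    have hm' : (0 : ℝ) < m := by exact_mod_cast hm
    have hi : (0 : ℝ) ≤ i := by positivity
    push_cast
    have e : ((i : ℝ) + (m + 1)) ^ 2 - (m : ℝ) ^ 2 = (i + 1) * (i + 1 + 2 * m) := by ring
    rw [e]
    field_simp
    ring
  · ring

lemma sum_sub_eq_H (p : ℕ) : ∑ i ∈ Finset.range p, 1 / ((p : ℝ) - i) = H p := by
  induction p with
  | zero => simp [H]
  | succ p ih =>
    rw [Finset.sum_range_succ', H_succ, ← ih]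
    push_cast
    congr 1
    · apply Finset.sum_congr rfl
      intro i _
      congr 1
      ring
    · simp

lemma sum_add_eq_H (a p : ℕ) :
    ∑ i ∈ Finset.range p, 1 / ((a : ℝ) + i + 1) = H (a + p) - H a := by
  induction p with
  | zero => simp
  | succ p ih =>
    rw [Finset.sum_range_succ, ih, ← add_assoc, H_succ]
    push_cast
    ring

/-- With `n = p + 1` and `m = i + 1`, the kernel is `(1/(2n)) * (1/(n-m) - 1/(n+m))`. For `n = 0` both
sides vanish, the right one because division by zero gives zero. -/
lemma sum_row (n : ℕ) :
    ∑ m ∈ Finset.Ioo 0 n, ker n m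
      = (2 * H n - H (2 * n)) / (2 * n) - 1 / (4 * (n : ℝ) ^ 2) := by
  rcases n with _ | p
  · simp
  have e : Finset.Ioo 0 (p + 1) = Finset.Ico 1 (p + 1) := by
    ext; simp [Finset.mem_Ioo, Finset.mem_Ico, Nat.pos_iff_ne_zero, Nat.one_le_iff_ne_zero]
  rw [e, Finset.sum_Ico_eq_sum_range, Nat.add_sub_cancel]
  have hterm : ∀ i ∈ Finset.range p, ker (p + 1) (1 + i)
      = 1 / (2 * ((p : ℝ) + 1)) *
        (1 / ((p : ℝ) - i) - 1 / (((p + 1 : ℕ) : ℝ) + i + 1)) := by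
    intro i hi
    rw [Finset.mem_range] at hi
    have hi' : (0 : ℝ) < (p : ℝ) - i := by
      rw [sub_pos]
      exact_mod_cast hi
    have h2 : (0 : ℝ) < (p : ℝ) + 1 + i + 1 := by positivity
    unfold ker
    rw [if_pos (by omega)]
    push_cast
    have e : ((p : ℝ) + 1) ^ 2 - (1 + (i : ℝ)) ^ 2 = (p - i) * (p + 1 + i + 1) := by ring
    rw [e]
    field_simp
    ring
  rw [Finset.sum_congr rfl hterm, ← Finset.mul_sum, Finset.sum_sub_distrib, sum_sub_eq_H,
    sum_add_eq_H]
  have e2 : 2 * (p + 1) = (p + 1 + p) + 1 := by ring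
  rw [e2, H_succ (p + 1 + p), H_succ p]
  push_cast
  have h3 : (p : ℝ) + 1 + p + 1 = 2 * (p + 1) := by ring
  rw [h3]
  field_simp
  ring

lemma geom_term (k n m : ℕ) (hm : 0 < m) (hmn : m < n) :
    ∑ j ∈ Finset.Icc 1 k, 1 / ((n : ℝ) ^ (2 * j + 1) * (m : ℝ) ^ (2 * (k + 1) - 2 * j - 1))
      = ker n m / (m : ℝ) ^ (2 * k) - ker n m / (n : ℝ) ^ (2 * k) := by
  unfold ker
  rw [if_pos ⟨hm, hmn⟩]
  have hm' : (0 : ℝ) < m := by exact_mod_cast hm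
  have hmn' : (m : ℝ) < n := by exact_mod_cast hmn
  have hn' : (0 : ℝ) < n := hm'.trans hmn'
  have hd : (n : ℝ) ^ 2 - (m : ℝ) ^ 2 ≠ 0 := by nlinarith
  induction k with
  | zero => simp
  | succ k ih =>
    rw [Finset.sum_Icc_succ_top (by omega)]
    have hstep : ∀ j ∈ Finset.Icc 1 k,
        1 / ((n : ℝ) ^ (2 * j + 1) * (m : ℝ) ^ (2 * (k + 1 + 1) - 2 * j - 1))
        = 1 / (m : ℝ) ^ 2 *
          (1 / ((n : ℝ) ^ (2 * j + 1) * (m : ℝ) ^ (2 * (k + 1) - 2 * j - 1))) := by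
      intro j hj
      rw [Finset.mem_Icc] at hj
      have : 2 * (k + 1 + 1) - 2 * j - 1 = (2 * (k + 1) - 2 * j - 1) + 2 := by omega
      rw [this, pow_add, one_div_mul_one_div]
      congr 1
      ring
    rw [Finset.sum_congr rfl hstep, ← Finset.mul_sum, ih]
    have : 2 * (k + 1 + 1) - 2 * (k + 1) - 1 = 1 := by omega
    rw [this]
    have e1 : 2 * (k + 1) = 2 * k + 2 := by ring
    rw [e1]
    simp only [pow_add, pow_one]
    field_simp
    ring

theorem stmt4 (s : ℕ) (hs : 2 ≤ s) :
    ∑ j ∈ Finset.Icc 1 (s - 1), dzeta (2 * j + 1) (2 * s - 2 * j - 1)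
      = (1 / 4) * rzeta (2 * s) := by
  obtain ⟨k, rfl⟩ : ∃ k, s = k + 1 := ⟨s - 1, by omega⟩
  have hk : 1 ≤ k := by omega
  rw [Nat.add_sub_cancel]
  set c : ℕ → ℝ := fun m => (2 * H m - H (2 * m)) / (2 * m) with hc
  set a : ℕ → ℝ := fun m => c m / (m : ℝ) ^ (2 * k) with ha
  set F : ℕ → ℕ → ℝ := fun n m => ker n m / (m : ℝ) ^ (2 * k) with hF
  have hF0 : ∀ n m, 0 ≤ F n m := fun n m => div_nonneg (ker_nonneg n m) (by positivity)
  have hcol : ∀ m, HasSum (fun n => F n m) (a m) := fun m => (hasSum_col m).div_const _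
  have ha0 : ∀ m, 0 ≤ a m := fun m => (hcol m).nonneg (fun n => hF0 n m)
  have hc1 : ∀ m, c m ≤ 1 := by
    intro m
    apply div_le_one_of_le₀ _ (by positivity)
    linarith [H_le m, H_nonneg (2 * m)]
  have hasum : Summable a := by
    refine Summable.of_nonneg_of_le ha0 (fun m => ?_)
      (Real.summable_one_div_nat_pow.2 (show 1 < 2 * k by omega))
    exact div_le_div_of_nonneg_right (hc1 m) (by positivity)
  have hprod : Summable (fun p : ℕ × ℕ => F p.2 p.1) := by
    rw [summable_prod_of_nonneg (fun p => hF0 _ _)]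
    refine ⟨fun m => (hcol m).summable, ?_⟩
    simpa only [(hcol _).tsum_eq] using hasum
  have htot : HasSum (fun p : ℕ × ℕ => F p.2 p.1) (∑' m, a m) := by
    have h := hprod.hasSum.prod_fiberwise hcol
    rw [h.tsum_eq]
    exact hprod.hasSum
  have hrowF : ∀ n, HasSum (fun m => F n m) (∑ m ∈ Finset.Ioo 0 n, F n m) := by
    intro n
    apply hasSum_sum_of_ne_finset_zero
    intro m hm
    rw [Finset.mem_Ioo] at hm
    simp [hF, ker, if_neg hm]
  -- The same double series, now summed along rows.
  have hA : HasSum (fun n => ∑ m ∈ Finset.Ioo 0 n, F n m) (∑' m, a m) :=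
    HasSum.prod_fiberwise ((Equiv.prodComm ℕ ℕ).hasSum_iff.2 htot) hrowF
  have hz : Summable (fun n : ℕ => 1 / (n : ℝ) ^ (2 * (k + 1))) :=
    Real.summable_one_div_nat_pow.2 (by omega)
  have hB : HasSum (fun n => ∑ m ∈ Finset.Ioo 0 n, ker n m / (n : ℝ) ^ (2 * k))
      (∑' m, a m - (1 / 4) * rzeta (2 * (k + 1))) := by
    convert hasum.hasSum.sub (hz.hasSum.mul_left (1 / 4)) using 1
    · rfl
    · funext n
      rw [← Finset.sum_div, sum_row, sub_div, ha]
      congr 1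
      rw [mul_add, pow_add, div_div, one_div_mul_one_div]
      congr 1
      ring
    · rfl
  have hdiff := hA.sub hB
  rw [sub_sub_cancel] at hdiff
  set D : ℕ → ℕ → ℝ := fun j n => ∑ m ∈ Finset.Ioo 0 n,
    1 / ((n : ℝ) ^ (2 * j + 1) * (m : ℝ) ^ (2 * (k + 1) - 2 * j - 1)) with hD
  have hD0 : ∀ j n, 0 ≤ D j n := fun j n => Finset.sum_nonneg fun m _ => by positivity
  have hsum : ∀ n, ∑ j ∈ Finset.Icc 1 k, D j n = ∑ m ∈ Finset.Ioo 0 n, F n m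
      - ∑ m ∈ Finset.Ioo 0 n, ker n m / (n : ℝ) ^ (2 * k) := by
    intro n
    rw [hD, Finset.sum_comm, ← Finset.sum_sub_distrib]
    apply Finset.sum_congr rfl
    intro m hm
    rw [Finset.mem_Ioo] at hm
    exact geom_term k n m hm.1 hm.2
  simp_rw [← hsum] at hdiff
  -- Each series in `j` is dominated by the total, which justifies exchanging it with the `j`-sum.
  have hDs : ∀ j ∈ Finset.Icc 1 k, Summable (D j) := fun j hj =>
    Summable.of_nonneg_of_le (hD0 j)
      (fun n => Finset.single_le_sum (f := fun j => D j n) (fun i _ => hD0 i n) hj)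
      hdiff.summable
  rw [← hdiff.tsum_eq, Summable.tsum_finsetSum hDs]
  rfl
end

section
/- For every integer s ≥ 1, (5/2) ζ(2s+1) + 2 ζ(2s, 1) + ∑_{j=2}^{2s} (-1)^j ζ(j, 2s+1-j) = 2 ∑_{n=1}^∞ H_{2n}/n^{2s}. -/
/-!
Write `N = 2 s`. For `0 < m < n` the alternating sum over `j` is geometric, and since `N - 1` is odd
`∑_{j=2}^{N} (-1)^j / (n^j m^{N+1-j}) = b n m + c n m`, where
`b n m = 1 / (m^{N-1} n (n+m))` and `c n m = 1 / (n^N (n+m))` (`geom_identity`).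

On the other side, `H_{2n} = H_{n-1} + 3/(2n) + ∑_{0<m<n} 1/(n+m)` (`H_two_mul`), so the right-hand
side is `2 ζ(N,1) + 3 ζ(N+1) + 2 ∑_{m<n} c n m`. Hence the claim reduces to
`∑_{m<n} b n m = ζ(N+1)/2 + ∑_{m<n} c n m` (`tsum_b`). This follows by summing over `n` first:
`m / (n (n+m)) = 1/n - 1/(n+m)` telescopes over `n > m` to
`∑_{k=1}^{m} 1/(m+k)`, whose term `k = m` gives `ζ(N+1)/2` and whose other terms give `c`.

All rearrangements are justified by the domination `1/(n² m) ≤ n^{-3/2} m^{-3/2}` for `m < n`.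
-/

open scoped BigOperators

/-- The extension by zero to `ℕ × ℕ` of a function on the pairs `0 < m < n`. -/
noncomputable def extTri (g : ℕ → ℕ → ℝ) (p : ℕ × ℕ) : ℝ :=
  if p.2 ∈ Finset.Ioo 0 p.1 then g p.1 p.2 else 0

lemma extTri_summable (g : ℕ → ℕ → ℝ) (h0 : ∀ n m, 0 < m → m < n → 0 ≤ g n m)
    (h1 : ∀ n m, 0 < m → m < n → g n m ≤ 1 / ((n : ℝ) ^ 2 * m)) :
    Summable (extTri g) := by
  have hs : Summable (fun n : ℕ => 1 / (n : ℝ) ^ (3 / 2 : ℝ)) :=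
    Real.summable_one_div_nat_rpow.2 (by norm_num)
  have hp := hs.mul_of_nonneg hs (fun n => by positivity) (fun n => by positivity)
  refine Summable.of_nonneg_of_le ?_ ?_ hp
  · rintro ⟨n, m⟩
    unfold extTri
    split_ifs with h
    · simp only [Finset.mem_Ioo] at h
      exact h0 n m h.1 h.2
    · exact le_rfl
  · rintro ⟨n, m⟩
    unfold extTri
    split_ifs with h
    · simp only [Finset.mem_Ioo] at h
      refine (h1 n m h.1 h.2).trans ?_
      have hm : (0 : ℝ) < m := by exact_mod_cast h.1
      have hmn : (m : ℝ) ≤ n := by exact_mod_cast h.2.le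
      have hn : (0 : ℝ) < n := hm.trans_le hmn
      rw [div_mul_div_comm, one_mul]
      apply one_div_le_one_div_of_le (by positivity)
      have e1 : (n : ℝ) ^ 2 = (n : ℝ) ^ (3 / 2 : ℝ) * (n : ℝ) ^ (1 / 2 : ℝ) := by
        rw [← Real.rpow_add hn, ← Real.rpow_natCast]; norm_num
      have e2 : (m : ℝ) ^ (3 / 2 : ℝ) = (m : ℝ) ^ (1 / 2 : ℝ) * (m : ℝ) := by
        nth_rewrite 3 [← Real.rpow_one (m : ℝ)]
        rw [← Real.rpow_add hm]; norm_num
      rw [e1, e2, mul_assoc]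
      gcongr
    · positivity

lemma extTri_inner (g : ℕ → ℕ → ℝ) (n : ℕ) :
    ∑' m, extTri g (n, m) = ∑ m ∈ Finset.Ioo 0 n, g n m := by
  rw [tsum_eq_sum (s := Finset.Ioo 0 n)]
  · exact Finset.sum_congr rfl fun m hm => by simp only [extTri, if_pos hm]
  · intro m hm
    simp only [extTri, if_neg hm]

lemma tri_summable (g : ℕ → ℕ → ℝ) (h0 : ∀ n m, 0 < m → m < n → 0 ≤ g n m)
    (h1 : ∀ n m, 0 < m → m < n → g n m ≤ 1 / ((n : ℝ) ^ 2 * m)) :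
    Summable (fun n : ℕ => ∑ m ∈ Finset.Ioo 0 n, g n m) := by
  simpa only [extTri_inner] using (extTri_summable g h0 h1).prod

lemma one_div_pow_mul_pow_le (a b : ℕ) (ha : 2 ≤ a) (hb : 1 ≤ b) (n m : ℕ) (hm : 0 < m)
    (hmn : m < n) : 1 / ((n : ℝ) ^ a * (m : ℝ) ^ b) ≤ 1 / ((n : ℝ) ^ 2 * m) := by
  have hm' : (1 : ℝ) ≤ m := by exact_mod_cast hm
  have hn' : (1 : ℝ) ≤ n := by exact_mod_cast (show 1 ≤ n by omega)
  have e := pow_le_pow_right₀ hm' hb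
  rw [pow_one] at e
  apply one_div_le_one_div_of_le (by positivity)
  gcongr

lemma dzeta_summable (a b : ℕ) (ha : 2 ≤ a) (hb : 1 ≤ b) :
    Summable (fun n : ℕ => ∑ m ∈ Finset.Ioo 0 n, 1 / ((n : ℝ) ^ a * (m : ℝ) ^ b)) :=
  tri_summable (fun n m => 1 / ((n : ℝ) ^ a * (m : ℝ) ^ b)) (fun n m _ _ => by positivity)
    (one_div_pow_mul_pow_le a b ha hb)

lemma c_summable (N : ℕ) (hN : 2 ≤ N) :
    Summable (fun n : ℕ => ∑ m ∈ Finset.Ioo 0 n, 1 / ((n : ℝ) ^ N * ((n : ℝ) + m))) := by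
  refine tri_summable (fun n m => 1 / ((n : ℝ) ^ N * ((n : ℝ) + m)))
    (fun n m _ _ => by positivity) fun n m hm hmn => ?_
  refine le_trans ?_ (one_div_pow_mul_pow_le N 1 hN le_rfl n m hm hmn)
  have hm' : (0 : ℝ) < m := by exact_mod_cast hm
  have hn' : (0 : ℝ) < n := by exact_mod_cast (hm.trans hmn)
  apply one_div_le_one_div_of_le (by positivity)
  rw [pow_one]
  gcongr
  linarith

lemma b_le (M : ℕ) (hM : 1 ≤ M) (n m : ℕ) (hm : 0 < m) (hmn : m < n) :
    1 / ((m : ℝ) ^ M * (n * ((n : ℝ) + m))) ≤ 1 / ((n : ℝ) ^ 2 * m) := by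
  refine le_trans ?_ (one_div_pow_mul_pow_le 2 M le_rfl hM n m hm hmn)
  have hm' : (0 : ℝ) < m := by exact_mod_cast hm
  have hn' : (0 : ℝ) < n := by exact_mod_cast (hm.trans hmn)
  apply one_div_le_one_div_of_le (by positivity)
  rw [mul_comm, pow_two]
  gcongr
  linarith

lemma b_summable (M : ℕ) (hM : 1 ≤ M) :
    Summable (fun n : ℕ => ∑ m ∈ Finset.Ioo 0 n, 1 / ((m : ℝ) ^ M * (n * ((n : ℝ) + m)))) :=
  tri_summable (fun n m => 1 / ((m : ℝ) ^ M * (n * ((n : ℝ) + m))))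
    (fun n m _ _ => by positivity) (b_le M hM)

lemma hasSum_telescope (g : ℕ → ℝ) (hg : Antitone g)
    (h : Filter.Tendsto g Filter.atTop (nhds 0)) (m : ℕ) :
    HasSum (fun i => g i - g (i + m)) (∑ i ∈ Finset.range m, g i) := by
  induction m with
  | zero => simp
  | succ m ih =>
    have h1 : HasSum (fun i => g (i + m) - g (i + 1 + m)) (g m) := by
      rw [hasSum_iff_tendsto_nat_of_nonneg fun i => sub_nonneg.2 (hg (by omega))]
      simp_rw [Finset.sum_range_sub' (fun i => g (i + m))]
      simpa using ((Filter.tendsto_add_atTop_iff_nat m).2 h).const_sub (g m)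
    rw [Finset.sum_range_succ]
    refine (ih.add h1).congr_fun ?_
    intro i
    rw [show i + (m + 1) = i + 1 + m by ring]
    ring

/-- The column sum over `n > m` of `1 / (m^M n (n+m))`; at `m = 0` both sides vanish. -/
lemma b_column (M m : ℕ) :
    ∑' n, extTri (fun n m => 1 / ((m : ℝ) ^ M * (n * ((n : ℝ) + m)))) (n, m)
      = (1 / 2) * (1 / (m : ℝ) ^ (M + 2))
        + ∑ k ∈ Finset.Ioo 0 m, 1 / ((m : ℝ) ^ (M + 1) * ((m : ℝ) + k)) := by
  rcases Nat.eq_zero_or_pos m with rfl | hm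
  · simp [extTri]
  have hm' : (0 : ℝ) < m := by exact_mod_cast hm
  have ht := hasSum_telescope (fun i => 1 / ((m : ℝ) + 1 + i))
    (fun i j hij => one_div_le_one_div_of_le (by positivity) (by gcongr))
    (by
      have := tendsto_one_div_add_atTop_nhds_zero_nat (𝕜 := ℝ)
      have := (Filter.tendsto_add_atTop_iff_nat m).2 this
      refine this.congr fun i => ?_
      push_cast
      congr 1
      ring) m
  have ht2 := ht.mul_left (1 / (m : ℝ) ^ (M + 1))
  -- the terms with `n ≤ m` vanish, so the column is the series shifted by `m + 1`
  have hs : HasSum (fun n => extTri (fun n m => 1 / ((m : ℝ) ^ M * (n * ((n : ℝ) + m)))) (n, m))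
      (1 / (m : ℝ) ^ (M + 1) * ∑ i ∈ Finset.range m, 1 / ((m : ℝ) + 1 + i)) := by
    rw [← hasSum_nat_add_iff' (m + 1), Finset.sum_eq_zero (s := Finset.range (m + 1)), sub_zero]
    · refine ht2.congr_fun ?_
      intro i
      have hmem : m ∈ Finset.Ioo 0 (i + (m + 1)) := by
        simp only [Finset.mem_Ioo]; omega
      simp only [extTri, if_pos hmem]
      push_cast
      field_simp
      ring
    · intro n hn
      have hn' : n < m + 1 := Finset.mem_range.1 hn
      have : m ∉ Finset.Ioo 0 n := by simp only [Finset.mem_Ioo]; omega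
      simp only [extTri, if_neg this]
  rw [hs.tsum_eq]
  obtain ⟨k, rfl⟩ : ∃ k, m = k + 1 := ⟨m - 1, by omega⟩
  rw [Finset.sum_range_succ, mul_add, add_comm]
  congr 1
  · push_cast
    field_simp
    ring
  · rw [Finset.mul_sum, ← Finset.Ico_succ_left_eq_Ioo, Finset.sum_Ico_eq_sum_range]
    refine Finset.sum_congr (by simp) fun i _ => ?_
    rw [div_mul_div_comm, one_mul]
    rw [Nat.succ_eq_succ]
    push_cast
    congr 2
    ring

lemma tsum_b (M : ℕ) (hM : 1 ≤ M) :
    ∑' n : ℕ, ∑ m ∈ Finset.Ioo 0 n, 1 / ((m : ℝ) ^ M * (n * ((n : ℝ) + m)))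
      = (1 / 2) * rzeta (M + 2)
        + ∑' n : ℕ, ∑ m ∈ Finset.Ioo 0 n, 1 / ((n : ℝ) ^ (M + 1) * ((n : ℝ) + m)) := by
  have hsum := extTri_summable (fun n m => 1 / ((m : ℝ) ^ M * (n * ((n : ℝ) + m))))
    (fun n m _ _ => by positivity) (b_le M hM)
  have hz : Summable (fun n : ℕ => 1 / (n : ℝ) ^ (M + 2)) :=
    Real.summable_one_div_nat_pow.2 (by omega)
  simp_rw [← extTri_inner (fun n m => 1 / ((m : ℝ) ^ M * (n * ((n : ℝ) + m))))]
  rw [← Summable.tsum_comm (f := fun n m =>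
    extTri (fun n m => 1 / ((m : ℝ) ^ M * (n * ((n : ℝ) + m)))) (n, m)) hsum]
  simp_rw [b_column]
  rw [(hz.mul_left (1 / 2)).tsum_add (c_summable (M + 1) (by omega)), tsum_mul_left, rzeta]

lemma geom_identity (t : ℕ) (x y : ℝ) (hx : 0 < x) (hy : 0 < y) :
    ∑ j ∈ Finset.Icc 2 (2 * (t + 1)), (-1 : ℝ) ^ j * (1 / (x ^ j * y ^ (2 * (t + 1) + 1 - j)))
      = 1 / (y ^ (2 * t + 1) * (x * (x + y))) + 1 / (x ^ (2 * (t + 1)) * (x + y)) := by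
  induction t with
  | zero =>
    norm_num
    field_simp
  | succ t ih =>
    have hstep : ∑ j ∈ Finset.Icc 2 (2 * (t + 1)),
        (-1 : ℝ) ^ j * (1 / (x ^ j * y ^ (2 * (t + 1 + 1) + 1 - j)))
        = (1 / y ^ 2) * ∑ j ∈ Finset.Icc 2 (2 * (t + 1)),
          (-1 : ℝ) ^ j * (1 / (x ^ j * y ^ (2 * (t + 1) + 1 - j))) := by
      rw [Finset.mul_sum]
      refine Finset.sum_congr rfl fun j hj => ?_
      have hj2 := (Finset.mem_Icc.1 hj).2
      rw [show 2 * (t + 1 + 1) + 1 - j = (2 * (t + 1) + 1 - j) + 2 by omega, pow_add]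
      field_simp
    rw [show 2 * (t + 1 + 1) = 2 * (t + 1) + 1 + 1 by ring] at hstep ⊢
    rw [Finset.sum_Icc_succ_top (by omega), Finset.sum_Icc_succ_top (by omega), hstep, ih,
      show 2 * (t + 1) + 1 + 1 + 1 - (2 * (t + 1) + 1) = 2 by omega,
      show 2 * (t + 1) + 1 + 1 + 1 - (2 * (t + 1) + 1 + 1) = 1 by omega,
      Odd.neg_one_pow ⟨t + 1, rfl⟩, Even.neg_one_pow ⟨t + 2, by ring⟩]
    field_simp
    ring

lemma H_two_mul (n : ℕ) (hn : 0 < n) :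
    H (2 * n) = ∑ m ∈ Finset.Ioo 0 n, 1 / (m : ℝ) + (3 / 2) * (1 / (n : ℝ))
      + ∑ m ∈ Finset.Ioo 0 n, 1 / ((n : ℝ) + m) := by
  obtain ⟨k, rfl⟩ : ∃ k, n = k + 1 := ⟨n - 1, by omega⟩
  have h1 : ∀ f : ℕ → ℝ, ∑ m ∈ Finset.Ioo 0 (k + 1), f m = ∑ i ∈ Finset.range k, f (i + 1) := by
    intro f
    rw [← Finset.Ico_succ_left_eq_Ioo, Finset.sum_Ico_eq_sum_range]
    exact Finset.sum_congr (by simp) fun i _ => by simp [add_comm]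
  have h2 : H (2 * (k + 1)) = ∑ i ∈ Finset.range ((k + 1) + (k + 1)), 1 / ((i : ℝ) + 1) := by
    rw [H, ← Finset.Ico_succ_right_eq_Icc, Finset.sum_Ico_eq_sum_range]
    refine Finset.sum_congr ?_ fun i _ => by push_cast; rw [add_comm]
    congr 1
    simp
    omega
  rw [h2, Finset.sum_range_add, Finset.sum_range_succ, Finset.sum_range_succ, h1, h1]
  have h3 : ∑ i ∈ Finset.range k, 1 / (((k + 1 + i : ℕ) : ℝ) + 1)
      = ∑ i ∈ Finset.range k, 1 / (((k + 1 : ℕ) : ℝ) + ((i + 1 : ℕ) : ℝ)) :=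
    Finset.sum_congr rfl fun i _ => by push_cast; rw [add_assoc ((k : ℝ) + 1)]
  rw [h3]
  push_cast
  field_simp
  ring

theorem stmt9 (s : ℕ) (hs : 1 ≤ s) :
    (5 / 2) * rzeta (2 * s + 1) + 2 * dzeta (2 * s) 1
        + ∑ j ∈ Finset.Icc 2 (2 * s), (-1 : ℝ) ^ j * dzeta j (2 * s + 1 - j)
      = 2 * ∑' n : ℕ, H (2 * n) / (n : ℝ) ^ (2 * s) := by
  obtain ⟨t, rfl⟩ : ∃ t, s = t + 1 := ⟨s - 1, by omega⟩
  have hz : Summable (fun n : ℕ => 1 / (n : ℝ) ^ (2 * (t + 1) + 1)) :=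
    Real.summable_one_div_nat_pow.2 (by omega)
  have hc := c_summable (2 * (t + 1)) (by omega)
  have hb := b_summable (2 * t + 1) (by omega)
  have hd := dzeta_summable (2 * (t + 1)) 1 (by omega) le_rfl
  have hA : ∑ j ∈ Finset.Icc 2 (2 * (t + 1)), (-1 : ℝ) ^ j * dzeta j (2 * (t + 1) + 1 - j)
      = ∑' n : ℕ, ∑ m ∈ Finset.Ioo 0 n, 1 / ((m : ℝ) ^ (2 * t + 1) * (n * ((n : ℝ) + m)))
        + ∑' n : ℕ, ∑ m ∈ Finset.Ioo 0 n, 1 / ((n : ℝ) ^ (2 * (t + 1)) * ((n : ℝ) + m)) := by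
    rw [← hb.tsum_add hc]
    simp_rw [dzeta, ← tsum_mul_left]
    rw [← Summable.tsum_finsetSum]
    · refine tsum_congr fun n => ?_
      simp_rw [Finset.mul_sum]
      rw [Finset.sum_comm, ← Finset.sum_add_distrib]
      refine Finset.sum_congr rfl fun m hm => ?_
      have hm' := Finset.mem_Ioo.1 hm
      exact geom_identity t n m (by exact_mod_cast hm'.1.trans hm'.2) (by exact_mod_cast hm'.1)
    · intro j hj
      have hj' := Finset.mem_Icc.1 hj
      exact (dzeta_summable j _ hj'.1 (by omega)).mul_left _
  have hR : ∑' n : ℕ, H (2 * n) / (n : ℝ) ^ (2 * (t + 1))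
      = dzeta (2 * (t + 1)) 1 + (3 / 2) * rzeta (2 * (t + 1) + 1)
        + ∑' n : ℕ, ∑ m ∈ Finset.Ioo 0 n, 1 / ((n : ℝ) ^ (2 * (t + 1)) * ((n : ℝ) + m)) := by
    rw [dzeta, rzeta, ← tsum_mul_left, ← hd.tsum_add (hz.mul_left _),
      ← (hd.add (hz.mul_left _)).tsum_add hc]
    refine tsum_congr fun n => ?_
    rcases Nat.eq_zero_or_pos n with rfl | hn
    · simp
    rw [H_two_mul n hn, add_div, add_div, Finset.sum_div, Finset.sum_div]
    have hn' : (0 : ℝ) < n := by exact_mod_cast hn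
    congr 1
    · congr 1
      · refine Finset.sum_congr rfl fun m _ => ?_
        rw [pow_one, div_div, mul_comm]
      · rw [pow_succ]
        field_simp
    · refine Finset.sum_congr rfl fun m _ => ?_
      rw [div_div, mul_comm]
  have hB := tsum_b (2 * t + 1) (by omega)
  rw [show 2 * t + 1 + 2 = 2 * (t + 1) + 1 by ring, show 2 * t + 1 + 1 = 2 * (t + 1) by ring] at hB
  rw [hA, hR, hB]
  ring
end
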